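/- The subgroup G = ⟨a, b⟩ of the group of homeomorphisms of [0,1] is isomorphic to the restricted wreath product ℤ wr ℤ, realized as the semidirect product (⨁_{k∈ℤ} ℤ) ⋊ ℤ where the generator of ℤ acts on the direct sum by shifting coordinates. -/

import Mathlib

/-!
The map `b` moves points only inside the interval `(1/2, 7/8)`, and `a (1/2) = 7/8`, so this
interval lies within one fundamental domain for the action of `a` on `(0,1)`. Hence the conjugates
`c k = aᵏ b a⁻ᵏ` have disjoint supports (`c_disjoint`) and commute, and conjugation by `a` shifts
their index (`a_conj_c`). This gives a homomorphism `wreathHom` from the semidirect product onto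
`⟨a, b⟩`. It is injective: the base group fixes every `aᵐ(1/2)`, which `a` permutes freely, so the
exponent of `a` in a kernel element vanishes; then the `k`-th coordinate is read off from the orbit
of `aᵏ(3/4)`, which `c k` moves and every other `c i` fixes. Both orbits are infinite because `a`
and `b` are increasing and push the base point upwards (`strictMono_orbit`).
-/

noncomputable section
set_option maxHeartbeats 2000000


/-- The underlying function of Thompson's generator `x₀`, extended by the
identity outside `[0,1]`. -/
def x0fun : ℝ → ℝ := fun α =>
  if α < 0 then α
  else if α ≤ 1/4 then 2*α
  else if α ≤ 1/2 then α + 1/4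
  else if α ≤ 1 then α/2 + 1/2
  else α

/-- The inverse of `x0fun`. -/
def x0inv : ℝ → ℝ := fun α =>
  if α < 0 then α
  else if α ≤ 1/2 then α/2
  else if α ≤ 3/4 then α - 1/4
  else if α ≤ 1 then 2*α - 1
  else α

/-- Thompson's generator `x₀`, as a permutation of `ℝ` which is the identity
outside `[0,1]`:  `x₀ α = 2α` on `[0,1/4]`, `α + 1/4` on `[1/4,1/2]`,
`α/2 + 1/2` on `[1/2,1]`. -/
def x₀ : Equiv.Perm ℝ where
  toFun := x0fun
  invFun := x0inv
  left_inv := by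
    intro x
    simp only [x0fun, x0inv]
    split_ifs <;> linarith
  right_inv := by
    intro x
    simp only [x0fun, x0inv]
    split_ifs <;> linarith

/-- The underlying function of Thompson's generator `x₁`, extended by the
identity outside `[0,1]`. -/
def x1fun : ℝ → ℝ := fun α =>
  if α ≤ 1/2 then α
  else if α ≤ 5/8 then 2*α - 1/2
  else if α ≤ 3/4 then α + 1/8
  else if α ≤ 1 then α/2 + 1/2
  else α

/-- The inverse of `x1fun`. -/
def x1inv : ℝ → ℝ := fun α =>
  if α ≤ 1/2 then α
  else if α ≤ 3/4 then α/2 + 1/4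
  else if α ≤ 7/8 then α - 1/8
  else if α ≤ 1 then 2*α - 1
  else α

/-- Thompson's generator `x₁`, as a permutation of `ℝ` which is the identity
outside `[0,1]`:  `x₁ α = α` on `[0,1/2]`, `2α - 1/2` on `[1/2,5/8]`,
`α + 1/8` on `[5/8,3/4]`, and on `[3/4,1]` the affine map of slope `1/2`
fixing `1` (written `α/2 + 3/4` in the source, an evident typo for
`α/2 + 1/2`, the unique slope-`1/2` affine map with `3/4 ↦ 7/8`, `1 ↦ 1`). -/
def x₁ : Equiv.Perm ℝ where
  toFun := x1fun
  invFun := x1inv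
  left_inv := by
    intro x
    simp only [x1fun, x1inv]
    split_ifs <;> linarith
  right_inv := by
    intro x
    simp only [x1fun, x1inv]
    split_ifs <;> linarith

/-- `x₂ = x₀⁻¹ x₁ x₀` (maps written on the right), i.e. the map
`α ↦ x₀ (x₁ (x₀⁻¹ α))`; in terms of composition this is `x₀ * x₁ * x₀⁻¹`. -/
def x₂ : Equiv.Perm ℝ := x₀ * x₁ * x₀⁻¹

/-- `b = x₁ x₂⁻¹` (maps written on the right), i.e. the map `α ↦ x₂⁻¹ (x₁ α)`. -/
def b : Equiv.Perm ℝ := x₂⁻¹ * x₁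

/-- `a = x₀²`. -/
def a : Equiv.Perm ℝ := x₀ ^ 2

/-- The conjugate `a⁻ᵏ b aᵏ` (maps written on the right), i.e. the map
`α ↦ x₀²ᵏ (b (x₀⁻²ᵏ α))`. -/
def c (k : ℤ) : Equiv.Perm ℝ := x₀ ^ (2*k) * b * x₀ ^ (-(2*k))

/-- The shift automorphism of the direct sum `⨁_{k∈ℤ} ℤ = (ℤ →₀ ℤ)`, shifting
coordinates by one. -/
def shiftAut : (ℤ →₀ ℤ) ≃+ (ℤ →₀ ℤ) := Finsupp.domCongr (Equiv.addRight (1 : ℤ))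

/-- The action of `ℤ` on the direct sum `⨁_{k∈ℤ} ℤ` in which the generator of
`ℤ` acts by shifting coordinates. -/
def shiftAction : Multiplicative ℤ →* MulAut (Multiplicative (ℤ →₀ ℤ)) :=
  zpowersHom _ (AddEquiv.toMultiplicative shiftAut)

/-! ### Increasing permutations of the line -/

theorem strictMono_inv_perm {g : Equiv.Perm ℝ} (hg : StrictMono g) :
    StrictMono (g⁻¹ : Equiv.Perm ℝ) := by
  intro x y hxy
  rw [← hg.lt_iff_lt]
  simpa using hxy

theorem strictMono_mul_perm {g h : Equiv.Perm ℝ} (hg : StrictMono g) (hh : StrictMono h) :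
    StrictMono (g * h : Equiv.Perm ℝ) := fun _ _ hxy => hg (hh hxy)

theorem strictMono_zpow_perm {g : Equiv.Perm ℝ} (hg : StrictMono g) (k : ℤ) :
    StrictMono (g ^ k : Equiv.Perm ℝ) := by
  induction k using Int.induction_on with
  | zero => intro x y hxy; simpa using hxy
  | succ n ih => rw [zpow_add_one]; exact strictMono_mul_perm ih hg
  | pred n ih => rw [zpow_sub_one]; exact strictMono_mul_perm ih (strictMono_inv_perm hg)

/-- An increasing permutation that moves `x` upwards has infinite order at `x`. -/
theorem strictMono_orbit {g : Equiv.Perm ℝ} (hg : StrictMono g) {x : ℝ} (hx : x < g x) :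
    StrictMono (fun k : ℤ => (g ^ k : Equiv.Perm ℝ) x) := by
  apply strictMono_int_of_lt_succ
  intro k
  rw [zpow_add_one]
  exact strictMono_zpow_perm hg k hx

/-! ### The maps `a` and `b` -/

theorem strictMono_x₀ : StrictMono x₀ := by
  intro x y hxy
  change x0fun x < x0fun y
  simp only [x0fun]
  split_ifs <;> linarith

theorem strictMono_x₁ : StrictMono x₁ := by
  intro x y hxy
  change x1fun x < x1fun y
  simp only [x1fun]
  split_ifs <;> linarith

theorem strictMono_a : StrictMono a := by
  rw [a, pow_two]
  exact strictMono_mul_perm strictMono_x₀ strictMono_x₀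

theorem strictMono_b : StrictMono b :=
  strictMono_mul_perm
    (strictMono_inv_perm (strictMono_mul_perm (strictMono_mul_perm strictMono_x₀ strictMono_x₁)
      (strictMono_inv_perm strictMono_x₀))) strictMono_x₁

theorem b_apply (x : ℝ) : b x = x0fun (x1inv (x0inv (x1fun x))) := by
  simp only [b, x₂, mul_inv_rev, inv_inv, Equiv.Perm.mul_apply]
  rfl

theorem a_half : a (1/2) = 7/8 := by
  change x0fun (x0fun (1/2)) = 7/8
  norm_num [x0fun]

theorem b_three_quarters : b (3/4) = 13/16 := by
  rw [b_apply]
  norm_num [x0fun, x1inv, x0inv, x1fun]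

theorem b_fix_left {x : ℝ} (hx : x ≤ 1/2) : b x = x := by
  have h1 : x1fun x = x := by simp only [x1fun]; rw [if_pos hx]
  have h2 : x0inv x ≤ 1/2 := by simp only [x0inv]; split_ifs <;> linarith
  have h3 : x1inv (x0inv x) = x0inv x := by simp only [x1inv]; rw [if_pos h2]
  rw [b_apply, h1, h3]
  exact x₀.right_inv x

theorem b_fix_right {x : ℝ} (hx : 7/8 ≤ x) : b x = x := by
  -- Beyond `7/8` the maps `x₁` and `x₀` agree, and so do `x₁⁻¹` and `x₀⁻¹`.
  have h1 : x1fun x = x0fun x := by simp only [x1fun, x0fun]; split_ifs <;> linarith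
  have h2 : x1inv x = x0inv x := by simp only [x1inv, x0inv]; split_ifs <;> linarith
  have h3 : x0inv (x0fun x) = x := x₀.left_inv x
  rw [b_apply, h1, h3, h2]
  exact x₀.right_inv x

/-! ### Supports of the conjugates of `b` -/

theorem c_eq (k : ℤ) : c k = a ^ k * b * (a ^ k)⁻¹ := by
  have h : x₀ ^ (2 * k) = a ^ k := by rw [zpow_mul]; rfl
  rw [c, zpow_neg, h]

/-- The division points `t k = aᵏ(1/2)`; the interval `(t k, t (k+1))` carries `c k`. -/
def t (k : ℤ) : ℝ := (a ^ k : Equiv.Perm ℝ) (1/2)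

theorem strictMono_t : StrictMono t :=
  strictMono_orbit strictMono_a (by rw [a_half]; norm_num)

theorem c_fix_left {k : ℤ} {x : ℝ} (hx : x ≤ t k) : c k x = x := by
  have h : ((a ^ k)⁻¹ : Equiv.Perm ℝ) x ≤ 1/2 := by
    rw [← (strictMono_zpow_perm strictMono_a k).le_iff_le]
    simpa [t] using hx
  rw [c_eq, Equiv.Perm.mul_apply, Equiv.Perm.mul_apply, b_fix_left h]
  simp

theorem c_fix_right {k : ℤ} {x : ℝ} (hx : t (k + 1) ≤ x) : c k x = x := by
  have h : 7/8 ≤ ((a ^ k)⁻¹ : Equiv.Perm ℝ) x := by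
    rw [← (strictMono_zpow_perm strictMono_a k).le_iff_le, ← a_half]
    rw [t, zpow_add_one] at hx
    simpa using hx
  rw [c_eq, Equiv.Perm.mul_apply, Equiv.Perm.mul_apply, b_fix_right h]
  simp

theorem c_disjoint {i j : ℤ} (h : i ≠ j) : Equiv.Perm.Disjoint (c i) (c j) := by
  wlog hij : i < j generalizing i j
  · exact (this h.symm (by omega)).symm
  intro x
  rcases le_total x (t j) with hx | hx
  · exact Or.inr (c_fix_left hx)
  · exact Or.inl (c_fix_right ((strictMono_t.monotone (by omega : i + 1 ≤ j)).trans hx))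

theorem c_commute (i j : ℤ) : Commute (c i) (c j) := by
  by_cases h : i = j
  · rw [h]
  · exact (c_disjoint h).commute

theorem c_fix_t (i m : ℤ) : c i (t m) = t m := by
  rcases le_or_gt m i with h | h
  · exact c_fix_left (strictMono_t.monotone h)
  · exact c_fix_right (strictMono_t.monotone (by omega : i + 1 ≤ m))

/-! ### The base group -/

open scoped IsMulCommutative in
/-- The free abelian group on `ι` maps to any group along a pairwise commuting family. -/
theorem exists_hom_of_commute {ι H : Type*} [Group H] (f : ι → H)
    (hf : ∀ i j, Commute (f i) (f j)) :
    ∃ F : Multiplicative (ι →₀ ℤ) →* H,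
      ∀ i n, F (Multiplicative.ofAdd (Finsupp.single i n)) = f i ^ n := by
  -- The generated subgroup is commutative, so the universal property of `ι →₀ ℤ` applies to it.
  have : IsMulCommutative (Subgroup.closure (Set.range f)) :=
    Subgroup.isMulCommutative_closure (by
      rintro _ ⟨i, rfl⟩ _ ⟨j, rfl⟩
      exact hf i j)
  let e : ι → Subgroup.closure (Set.range f) :=
    fun i => ⟨f i, Subgroup.subset_closure ⟨i, rfl⟩⟩
  let L : (ι →₀ ℤ) →+ Additive (Subgroup.closure (Set.range f)) :=
    Finsupp.liftAddHom (fun i => zmultiplesHom _ (Additive.ofMul (e i)))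
  refine ⟨(Subgroup.subtype _).comp (AddMonoidHom.toMultiplicativeLeft L), fun i n => ?_⟩
  have h : L (Finsupp.single i n) = Additive.ofMul (e i ^ n) := by
    simp [L]
  change ((Additive.toMul (L (Finsupp.single i n)) : Subgroup.closure (Set.range f)) : H) = _
  rw [h]
  rfl

/-- The homomorphism from the direct sum sending the `k`-th basis vector to `c k`. -/
def baseHom : Multiplicative (ℤ →₀ ℤ) →* Equiv.Perm ℝ :=
  (exists_hom_of_commute c c_commute).choose

theorem baseHom_single (k n : ℤ) :
    baseHom (Multiplicative.ofAdd (Finsupp.single k n)) = c k ^ n :=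
  (exists_hom_of_commute c c_commute).choose_spec k n

/-- At a point moved by at most one of the `c i`, only that coordinate matters. -/
theorem baseHom_apply (k : ℤ) (v : ℤ →₀ ℤ) :
    ∀ x : ℝ, (∀ i, i ≠ k → c i x = x) →
      baseHom (Multiplicative.ofAdd v) x = (c k ^ v k : Equiv.Perm ℝ) x := by
  induction v using Finsupp.induction_linear with
  | zero => intro x _; simp
  | add v w hv hw =>
    intro x hx
    -- The hypothesis on `x` persists along its `c k`-orbit because the `c i` commute.
    have h : ∀ i, i ≠ k → c i ((c k ^ w k : Equiv.Perm ℝ) x) = (c k ^ w k : Equiv.Perm ℝ) x := by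
      intro i hi
      have := ((c_commute i k).zpow_right (w k)).eq
      rw [← Equiv.Perm.mul_apply, this, Equiv.Perm.mul_apply, hx i hi]
    rw [ofAdd_add, map_mul, Equiv.Perm.mul_apply, hw x hx, hv _ h, Finsupp.add_apply, zpow_add,
      Equiv.Perm.mul_apply]
  | single i n =>
    intro x hx
    rw [baseHom_single]
    by_cases h : i = k
    · subst h; simp
    · rw [Finsupp.single_eq_of_ne (Ne.symm h), zpow_zero, Equiv.Perm.one_apply]
      exact Equiv.Perm.zpow_apply_eq_self_of_apply_eq_self (hx i h) n

theorem baseHom_t (v : ℤ →₀ ℤ) (m : ℤ) : baseHom (Multiplicative.ofAdd v) (t m) = t m := by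
  rw [baseHom_apply 0 v (t m) fun i _ => c_fix_t i m]
  exact Equiv.Perm.zpow_apply_eq_self_of_apply_eq_self (c_fix_t 0 m) _

/-! ### The homomorphism from the wreath product -/

theorem shiftAction_single (m k n : ℤ) :
    shiftAction (Multiplicative.ofAdd m) (Multiplicative.ofAdd (Finsupp.single k n)) =
      Multiplicative.ofAdd (Finsupp.single (k + m) n) := by
  have step : ∀ j : ℤ, (AddEquiv.toMultiplicative shiftAut)
      (Multiplicative.ofAdd (Finsupp.single j n)) =
      Multiplicative.ofAdd (Finsupp.single (j + 1) n) := by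
    intro j
    change Multiplicative.ofAdd (Finsupp.equivMapDomain _ (Finsupp.single j n)) = _
    rw [Finsupp.equivMapDomain_single]
    rfl
  have h : shiftAction (Multiplicative.ofAdd m) =
      (AddEquiv.toMultiplicative shiftAut : MulAut (Multiplicative (ℤ →₀ ℤ))) ^ m := rfl
  rw [h]
  clear h
  induction m using Int.induction_on generalizing k with
  | zero => simp
  | succ m ih =>
    rw [zpow_add_one, MulAut.mul_apply, step, ih, add_assoc, add_comm 1]
  | pred m ih =>
    have h := step (k - 1)
    rw [sub_add_cancel] at h
    rw [zpow_sub_one, MulAut.mul_apply, ← h, MulAut.inv_apply_self, ih]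
    congr 2
    ring

theorem a_conj_c (m k : ℤ) : a ^ m * c k * (a ^ m)⁻¹ = c (k + m) := by
  rw [c_eq, c_eq, add_comm, zpow_add]
  group

/-- The homomorphism `(v, n) ↦ (∏ₖ (c k) ^ v k) * aⁿ` from the wreath product. -/
def wreathHom : (Multiplicative (ℤ →₀ ℤ) ⋊[shiftAction] Multiplicative ℤ) →* Equiv.Perm ℝ :=
  SemidirectProduct.lift baseHom (zpowersHom _ a) (by
    intro g
    apply Finsupp.mulHom_ext
    intro k n
    change baseHom (shiftAction g (Multiplicative.ofAdd (Finsupp.single k n))) =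
      a ^ (Multiplicative.toAdd g) * baseHom (Multiplicative.ofAdd (Finsupp.single k n)) *
        (a ^ (Multiplicative.toAdd g))⁻¹
    rw [← ofAdd_toAdd g, shiftAction_single, baseHom_single, baseHom_single, ← a_conj_c,
      conj_zpow]
    rfl)

theorem wreathHom_injective : Function.Injective wreathHom := by
  rw [injective_iff_map_eq_one]
  rintro ⟨v, n⟩ h
  obtain ⟨v, rfl⟩ := Multiplicative.ofAdd.surjective v
  obtain ⟨n, rfl⟩ := Multiplicative.ofAdd.surjective n
  have h' : baseHom (Multiplicative.ofAdd v) * a ^ n = 1 := h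
  -- The base group fixes every `t m`, so the action on these points detects the power of `a`.
  have hn : n = 0 := by
    have h1 := congrArg (fun g : Equiv.Perm ℝ => g (1/2)) h'
    have h2 : baseHom (Multiplicative.ofAdd v) (t n) = 1/2 := h1
    rw [baseHom_t] at h2
    apply strictMono_t.injective
    rw [h2]
    rfl
  subst hn
  rw [zpow_zero, mul_one] at h'
  have hv : v = 0 := by
    ext k
    -- The point `aᵏ(3/4)` lies strictly inside the interval carrying `c k`.
    set p : ℝ := (a ^ k : Equiv.Perm ℝ) (3/4) with hp
    have hp1 : c k p ≠ p := by
      rw [c_eq, hp]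
      rw [Equiv.Perm.mul_apply, Equiv.Perm.mul_apply, ← Equiv.Perm.mul_apply (a ^ k)⁻¹,
        inv_mul_cancel, Equiv.Perm.one_apply, b_three_quarters, (a ^ k : Equiv.Perm ℝ).injective.ne_iff]
      norm_num
    have hfix : ∀ i, i ≠ k → c i p = p := fun i hi =>
      (c_disjoint hi p).resolve_right hp1
    have h1 := baseHom_apply k v p hfix
    rw [h', Equiv.Perm.one_apply, c_eq, conj_zpow, hp] at h1
    rw [Equiv.Perm.mul_apply, Equiv.Perm.mul_apply, ← Equiv.Perm.mul_apply (a ^ k)⁻¹,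
      inv_mul_cancel, Equiv.Perm.one_apply] at h1
    have h2 := (a ^ k : Equiv.Perm ℝ).injective h1
    have hb : StrictMono (fun k : ℤ => (b ^ k : Equiv.Perm ℝ) (3/4)) :=
      strictMono_orbit strictMono_b (by rw [b_three_quarters]; norm_num)
    exact hb.injective (a₂ := 0) h2.symm
  subst hv
  rfl

theorem wreathHom_range : wreathHom.range = Subgroup.closure {a, b} := by
  have ha : a ∈ Subgroup.closure {a, b} := Subgroup.subset_closure (by simp)
  have hb : b ∈ Subgroup.closure {a, b} := Subgroup.subset_closure (by simp)
  apply le_antisymm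
  · rintro _ ⟨⟨v, n⟩, rfl⟩
    obtain ⟨v, rfl⟩ := Multiplicative.ofAdd.surjective v
    change baseHom (Multiplicative.ofAdd v) * a ^ (Multiplicative.toAdd n) ∈ _
    refine mul_mem ?_ (zpow_mem ha _)
    induction v using Finsupp.induction_linear with
    | zero => simp
    | add v w hv hw => rw [ofAdd_add, map_mul]; exact mul_mem hv hw
    | single k m =>
      rw [baseHom_single, c_eq]
      exact zpow_mem (mul_mem (mul_mem (zpow_mem ha k) hb) (inv_mem (zpow_mem ha k))) m
  · rw [Subgroup.closure_le]
    rintro x (rfl | rfl)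
    · refine ⟨SemidirectProduct.inr (Multiplicative.ofAdd 1), ?_⟩
      rw [wreathHom, SemidirectProduct.lift_inr]
      exact zpow_one a
    · refine ⟨SemidirectProduct.inl (Multiplicative.ofAdd (Finsupp.single 0 1)), ?_⟩
      rw [wreathHom, SemidirectProduct.lift_inl, baseHom_single, c_eq]
      simp

/-- the subgroup `G = ⟨a, b⟩` is isomorphic to the restricted
wreath product `ℤ wr ℤ`, realized as the semidirect product
`(⨁_{k∈ℤ} ℤ) ⋊ ℤ` where the generator of `ℤ` acts by shifting coordinates. -/
theorem G_iso_wreath :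
    Nonempty
      ((Subgroup.closure ({a, b} : Set (Equiv.Perm ℝ))) ≃*
        (Multiplicative (ℤ →₀ ℤ) ⋊[shiftAction] Multiplicative ℤ)) := by
  rw [← wreathHom_range]
  exact ⟨(MonoidHom.ofInjective wreathHom_injective).symm⟩
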